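/- arXiv:1606.08139 — 9 statements merged into one kernel-verified Lean document; each statement's English description precedes it below -/
import Mathlib

section
/- Let B be the quotient of the free ℂ-algebra on generators θ₁, φ₁, θ₂, φ₂ by the two-sided ideal generated by: θ₁φ₁ − q²φ₁θ₁, θ₂φ₂ − q²φ₂θ₂, θ₁³, φ₁³, θ₂³, φ₂³, θ₂θ₁ − qθ₁θ₂, θ₂φ₁ − q²φ₁θ₂, φ₂θ₁ − qθ₁φ₂, φ₂φ₁ − q²φ₁φ₂. Then the elements Θ = θ₁ + θ₂ and Φ = φ₁ + φ₂ of B satisfy Θ·Φ = q²·Φ·Θ, Θ³ = 0 and Φ³ = 0. (This is the content of Theorem 3.2: the coproduct Δ(θ) = θ⊗1 + 1⊗θ, Δ(φ) = φ⊗1 + 1⊗φ respects the defining relations of O(R_q^{0|2}) in the Z₃-graded tensor square.) -/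
/-! Put `Θ = θ₁ + θ₂` and `Φ = φ₁ + φ₂`. The relation `ΘΦ = q²ΦΘ` holds term by term after
expanding. For the cubes, `θ₂θ₁ = qθ₁θ₂` and `φ₂φ₁ = q²φ₁φ₂` are skew-commutation relations whose
parameters `q` and `q²` are both roots of `1 + r + r²`, so the mixed terms of each cube vanish by
the `q`-binomial theorem (`add_cube_eq_zero_of_skew`). -/

/-- The case `n = 3` of the `q`-binomial theorem at a primitive cube root of unity `r`: the mixed
terms `x²y` and `xy²` both carry the coefficient `1 + r + r² = 0`. -/
theorem add_cube_eq_zero_of_skew {B : Type*} [Ring B] [Algebra ℂ B] {r : ℂ}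
    (hr : 1 + r + r ^ 2 = 0) {x y : B} (hx : x ^ 3 = 0) (hy : y ^ 3 = 0)
    (h : y * x = r • (x * y)) : (x + y) ^ 3 = 0 := by
  have e1 : x * y * x = r • (x * x * y) := by
    rw [mul_assoc, h, mul_smul_comm, ← mul_assoc]
  have e2 : y * x * x = r ^ 2 • (x * x * y) := by
    rw [h, smul_mul_assoc, e1, smul_smul, sq]
  have e3 : y * x * y = r • (x * y * y) := by
    rw [h, smul_mul_assoc]
  have e4 : y * y * x = r ^ 2 • (x * y * y) := by
    rw [mul_assoc, h, mul_smul_comm, ← mul_assoc, e3, smul_smul, sq]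
  calc (x + y) ^ 3
      = x ^ 3 + y ^ 3 + (x * x * y + x * y * x + y * x * x)
          + (x * y * y + y * x * y + y * y * x) := by noncomm_ring
    _ = (1 + r + r ^ 2) • (x * x * y) + (1 + r + r ^ 2) • (x * y * y) := by
        rw [hx, hy, e1, e2, e3, e4]; module
    _ = 0 := by rw [hr, zero_smul, zero_smul, add_zero]

/-- Theorem 3.2: In the Z₃-graded tensor square
`B = O(R_q^{0|2}) ⊗ O(R_q^{0|2})` — realized here universally as any ℂ-algebra with
elements `θ₁, φ₁, θ₂, φ₂` satisfying the defining relations of the quotient of the free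
algebra by the listed two-sided ideal — the elements `Θ = θ₁ + θ₂` and `Φ = φ₁ + φ₂`
satisfy `Θ·Φ = q²·Φ·Θ`, `Θ³ = 0` and `Φ³ = 0`. Since the identities asked for hold in the
quotient algebra iff they hold in every algebra whose elements satisfy the relations
(by the universal property of the quotient), this formalization is equivalent. -/
theorem stmt_2 (q : ℂ) (hq3 : q ^ 3 = 1) (hq1 : q ≠ 1)
    (B : Type*) [Ring B] [Algebra ℂ B]
    (θ₁ φ₁ θ₂ φ₂ : B)
    (h1 : θ₁ * φ₁ = q ^ 2 • (φ₁ * θ₁))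
    (h2 : θ₂ * φ₂ = q ^ 2 • (φ₂ * θ₂))
    (h3 : θ₁ ^ 3 = 0) (h4 : φ₁ ^ 3 = 0) (h5 : θ₂ ^ 3 = 0) (h6 : φ₂ ^ 3 = 0)
    (h7 : θ₂ * θ₁ = q • (θ₁ * θ₂))
    (h8 : θ₂ * φ₁ = q ^ 2 • (φ₁ * θ₂))
    (h9 : φ₂ * θ₁ = q • (θ₁ * φ₂))
    (h10 : φ₂ * φ₁ = q ^ 2 • (φ₁ * φ₂)) :
    (θ₁ + θ₂) * (φ₁ + φ₂) = q ^ 2 • ((φ₁ + φ₂) * (θ₁ + θ₂)) ∧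
    (θ₁ + θ₂) ^ 3 = 0 ∧ (φ₁ + φ₂) ^ 3 = 0 := by
  have hq : 1 + q + q ^ 2 = 0 := by
    refine (mul_eq_zero.mp ?_).resolve_left (sub_ne_zero.mpr hq1)
    linear_combination hq3
  have hq' : 1 + q ^ 2 + (q ^ 2) ^ 2 = 0 := by linear_combination hq + q * hq3
  refine ⟨?_, add_cube_eq_zero_of_skew hq h3 h5 h7, add_cube_eq_zero_of_skew hq' h4 h6 h10⟩
  -- The cross term `θ₁φ₂` matches because `q² · q = 1`.
  have h9' : q ^ 2 • (φ₂ * θ₁) = θ₁ * φ₂ := by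
    rw [h9, smul_smul, ← pow_succ, hq3, one_smul]
  simp only [add_mul, mul_add, smul_add, h9', ← h1, ← h2, ← h8]
  abel
end

section
/- Let C be the quotient of the free ℂ-algebra on generators a, β, γ, d, θ, φ by the two-sided ideal generated by: aβ − βa, βγ − γβ, dβ − βd, aγ − qγa, dγ − q²γd, ad − da − (q−1)βγ, θφ − q²φθ, θ³, φ³, θa − aθ, θd − dθ, θγ − qγθ, θβ − q²βθ, φa − aφ, φd − dφ, φγ − q²γφ, φβ − qβφ. Then the elements θ' = aθ + βφ and φ' = γθ + dφ of C satisfy θ'·φ' = q²·φ'·θ', (θ')³ = 0 and (φ')³ = 0. (This is Lemma 4.2 / Theorem 4.3: the left coaction δ_L(θ) = a⊗θ + β⊗φ, δ_L(φ) = γ⊗θ + d⊗φ of the Z₃-graded quantum group on the Z₃-graded exterior plane is well-defined.) -/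
/-!
For the quadratic relation, the products `θ' * φ'` and `φ' * θ'` are expanded and each of the
four terms is brought to the normal form (quantum group part) · (monomial in `φ`, `θ`); the two
expansions then agree because `q ^ 3 = 1` and `a * d = d * a + (q - 1) • (β * γ)`.

For the cubes, both `θ'` and `φ'` are sums `x + y` of `q`-commuting elements, `x * y = q • (y * x)`.
By the `q`-binomial formula at a primitive cube root of unity, where `1 + q + q ^ 2 = 0`, one has
`(x + y) ^ 3 = x ^ 3 + y ^ 3` (`add_pow_three_of_qcomm`). Each summand is a product of a quantum
group generator and a coordinate which commute up to a scalar, so its cube is a multiple of the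
cube of that coordinate, which vanishes (`mul_pow_three_of_qcomm`).
-/

/-- The `q`-binomial formula in degree three at a primitive cube root of unity. -/
theorem add_pow_three_of_qcomm {C : Type*} [Ring C] [Algebra ℂ C] {q : ℂ}
    (hq : 1 + q + q ^ 2 = 0) {x y : C} (h : x * y = q • (y * x)) :
    (x + y) ^ 3 = x ^ 3 + y ^ 3 := by
  have e1 : x * y * x = q • (y * x * x) := by rw [h, smul_mul_assoc]
  have e2 : x * x * y = q ^ 2 • (y * x * x) := by
    rw [mul_assoc, h, mul_smul_comm, ← mul_assoc, e1, smul_smul, pow_two]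
  have e3 : y * x * y = q • (y * y * x) := by rw [mul_assoc, h, mul_smul_comm, mul_assoc]
  have e4 : x * y * y = q ^ 2 • (y * y * x) := by
    rw [h, smul_mul_assoc, e3, smul_smul, pow_two]
  have expand : (x + y) ^ 3 = x ^ 3 + y ^ 3 + (y * x * x + x * y * x + x * x * y)
      + (y * y * x + y * x * y + x * y * y) := by noncomm_ring
  have hz (z : C) : z + q • z + q ^ 2 • z = 0 := by
    calc z + q • z + q ^ 2 • z = (1 + q + q ^ 2) • z := by module
      _ = 0 := by rw [hq, zero_smul]
  rw [expand, e1, e2, e3, e4, hz, hz, add_zero, add_zero]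

/-- If `y` commutes with `x` up to a scalar and `y ^ 3 = 0`, then `(x * y) ^ 3 = 0`, since all
factors `y` can be moved to the right. -/
theorem mul_pow_three_of_qcomm {C : Type*} [Ring C] [Algebra ℂ C] {c : ℂ} {x y : C}
    (h : y * x = c • (x * y)) (hy : y ^ 3 = 0) : (x * y) ^ 3 = 0 := by
  have e1 : (x * y) * (x * y) = c • (x * x * (y * y)) := by
    rw [mul_assoc, ← mul_assoc y x y, h]
    simp only [smul_mul_assoc, mul_smul_comm, mul_assoc]
  have e2 : (y * y) * x = c ^ 2 • (x * (y * y)) := by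
    rw [mul_assoc, h, mul_smul_comm, ← mul_assoc, h, smul_mul_assoc, smul_smul, pow_two,
      mul_assoc]
  calc (x * y) ^ 3 = (x * y) * (x * y) * (x * y) := by noncomm_ring
    _ = c • (x * x * ((y * y) * x) * y) := by
      rw [e1, smul_mul_assoc]; simp only [mul_assoc]
    _ = c • c ^ 2 • (x * x * x * y ^ 3) := by
      rw [e2, mul_smul_comm, smul_mul_assoc, pow_three]; simp only [mul_assoc]
    _ = 0 := by rw [hy, mul_zero, smul_zero, smul_zero]

/-- A product `(g * u) * (k * v)` in which `u` is moved past `k` at the cost of the scalar `c`. -/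
theorem mul_mul_mul_of_qcomm {C : Type*} [Ring C] [Algebra ℂ C] {c : ℂ} {u k : C} (g v : C)
    (h : u * k = c • (k * u)) : (g * u) * (k * v) = c • (g * k * (u * v)) := by
  rw [mul_assoc, ← mul_assoc u k v, h]
  simp only [smul_mul_assoc, mul_smul_comm, mul_assoc]

/-- Lemma 4.2 / Theorem 4.3: In the Z₃-graded tensor product
`C = O(M̃_q(2)) ⊗ O(R_q^{0|2})` — realized universally as any ℂ-algebra with elements
`a, β, γ, d, θ, φ` satisfying the defining relations of the quotient of the free algebra
by the listed two-sided ideal — the coacted elements `θ' = aθ + βφ` and `φ' = γθ + dφ`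
satisfy `θ'·φ' = q²·φ'·θ'`, `(θ')³ = 0` and `(φ')³ = 0`. -/
theorem stmt_3 (q : ℂ) (hq3 : q ^ 3 = 1) (hq1 : q ≠ 1)
    (C : Type*) [Ring C] [Algebra ℂ C]
    (a β γ d θ φ : C)
    (h1 : a * β = β * a) (h2 : β * γ = γ * β) (h3 : d * β = β * d)
    (h4 : a * γ = q • (γ * a)) (h5 : d * γ = q ^ 2 • (γ * d))
    (h6 : a * d = d * a + (q - 1) • (β * γ))
    (h7 : θ * φ = q ^ 2 • (φ * θ)) (h8 : θ ^ 3 = 0) (h9 : φ ^ 3 = 0)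
    (h10 : θ * a = a * θ) (h11 : θ * d = d * θ)
    (h12 : θ * γ = q • (γ * θ)) (h13 : θ * β = q ^ 2 • (β * θ))
    (h14 : φ * a = a * φ) (h15 : φ * d = d * φ)
    (h16 : φ * γ = q ^ 2 • (γ * φ)) (h17 : φ * β = q • (β * φ))
    (θ' φ' : C)
    (hθ' : θ' = a * θ + β * φ) (hφ' : φ' = γ * θ + d * φ) :
    θ' * φ' = q ^ 2 • (φ' * θ') ∧ θ' ^ 3 = 0 ∧ φ' ^ 3 = 0 := by
  have hq : 1 + q + q ^ 2 = 0 := by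
    have h : (q - 1) * (1 + q + q ^ 2) = 0 := by linear_combination hq3
    exact (mul_eq_zero.mp h).resolve_left (sub_ne_zero.mpr hq1)
  have hq4 : q ^ 4 = q := by linear_combination q * hq3
  -- The degree-zero generators commute with the coordinates, i.e. up to the scalar `1`.
  have h10' : θ * a = (1 : ℂ) • (a * θ) := by rw [one_smul, h10]
  have h11' : θ * d = (1 : ℂ) • (d * θ) := by rw [one_smul, h11]
  have h14' : φ * a = (1 : ℂ) • (a * φ) := by rw [one_smul, h14]
  have h15' : φ * d = (1 : ℂ) • (d * φ) := by rw [one_smul, h15]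
  -- Normal forms of the mixed products of the summands of `θ'` and `φ'`.
  have p1 : (a * θ) * (γ * θ) = q ^ 2 • (γ * a * (θ * θ)) := by
    rw [mul_mul_mul_of_qcomm a θ h12, h4, smul_mul_assoc, smul_smul, pow_two]
  have p2 : (a * θ) * (d * φ)
      = q ^ 2 • (d * a * (φ * θ)) + (q ^ 2 * (q - 1)) • (β * γ * (φ * θ)) := by
    rw [mul_mul_mul_of_qcomm a φ h11', h6, h7, mul_smul_comm, add_mul, smul_mul_assoc]
    module
  have p3 : (β * φ) * (γ * θ) = q ^ 2 • (β * γ * (φ * θ)) := mul_mul_mul_of_qcomm β θ h16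
  -- The coefficient `1` is written as `q ^ 3`, the form in which it appears in `q ^ 2 • (φ' * θ')`.
  have p4 : (β * φ) * (d * φ) = q ^ 3 • (β * d * (φ * φ)) := by
    rw [mul_mul_mul_of_qcomm β φ h15', hq3]
  have r1 : (γ * θ) * (a * θ) = γ * a * (θ * θ) := by
    rw [mul_mul_mul_of_qcomm γ θ h10', one_smul]
  have r2 : (γ * θ) * (β * φ) = q • (β * γ * (φ * θ)) := by
    rw [mul_mul_mul_of_qcomm γ φ h13, ← h2, h7, mul_smul_comm, smul_smul, ← pow_add, hq4]
  have r3 : (d * φ) * (a * θ) = d * a * (φ * θ) := by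
    rw [mul_mul_mul_of_qcomm d θ h14', one_smul]
  have r4 : (d * φ) * (β * φ) = q • (β * d * (φ * φ)) := by
    rw [mul_mul_mul_of_qcomm d φ h17, h3]
  subst hθ' hφ'
  refine ⟨?_, ?_, ?_⟩
  · have hl : (a * θ + β * φ) * (γ * θ + d * φ) = (a * θ) * (γ * θ) + (a * θ) * (d * φ)
        + (β * φ) * (γ * θ) + (β * φ) * (d * φ) := by noncomm_ring
    have hr : (γ * θ + d * φ) * (a * θ + β * φ) = (γ * θ) * (a * θ) + (γ * θ) * (β * φ)
        + (d * φ) * (a * θ) + (d * φ) * (β * φ) := by noncomm_ring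
    rw [hl, hr, p1, p2, p3, p4, r1, r2, r3, r4]
    module
  · have hxy : (a * θ) * (β * φ) = q • ((β * φ) * (a * θ)) := by
      rw [mul_mul_mul_of_qcomm a φ h13, mul_mul_mul_of_qcomm β θ h14', h1, h7, mul_smul_comm,
        smul_smul, ← pow_add, hq4, one_smul]
    rw [add_pow_three_of_qcomm hq hxy, mul_pow_three_of_qcomm h10' h8,
      mul_pow_three_of_qcomm h17 h9, add_zero]
  · have hxy : (γ * θ) * (d * φ) = q • ((d * φ) * (γ * θ)) := by
      rw [mul_mul_mul_of_qcomm γ φ h11', mul_mul_mul_of_qcomm d θ h16, h5, h7, mul_smul_comm,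
        smul_mul_assoc, smul_smul, smul_smul, smul_smul]
      congr 1
      linear_combination -q ^ 2 * hq3
    rw [add_pow_three_of_qcomm hq hxy, mul_pow_three_of_qcomm h12 h8,
      mul_pow_three_of_qcomm h15' h9, add_zero]
end

section
/- Let q ∈ ℂ be a primitive cube root of unity and let R̂ be the 4×4 complex matrix [[q,0,0,0],[0,0,1,0],[0,1,q−q²,0],[0,0,0,q]]. Set R̂₁₂ = R̂ ⊗ I₂ and R̂₂₃ = I₂ ⊗ R̂ (Kronecker products with the 2×2 identity matrix, giving 8×8 matrices). Then R̂₁₂ R̂₂₃ R̂₁₂ = R̂₂₃ R̂₁₂ R̂₂₃ (the Z₃-graded braid relation). (Theorem 7.1(a).) -/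
/-!
With `s = q - q ^ 2`, the matrix `R` has the diagonal entry `q` and the middle block
`[[0, 1], [1, s]]`. Since `q ^ 3 = 1`, we have `s = q - q⁻¹`, so this is the standard Hecke-type
R-matrix, with `R ^ 2 = s R + 1`. Entrywise, every nontrivial case of the braid relation is a
multiple of the single identity `q ^ 2 = q s + 1`, which is `q ^ 3 = 1` again.
-/

set_option maxHeartbeats 2000000 in
open Kronecker in
/-- Theorem 7.1(a): the Z₃-graded braid relation
`R̂₁₂ R̂₂₃ R̂₁₂ = R̂₂₃ R̂₁₂ R̂₂₃`, where `R̂₁₂ = R̂ ⊗ I₂` and `R̂₂₃ = I₂ ⊗ R̂`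
(Kronecker products, identified along the associativity equivalence of index types),
and `R̂` is the 4×4 matrix with rows/columns indexed by pairs `(i,j) ∈ Fin 2 × Fin 2`,
whose nonzero entries are `R̂_{(0,0),(0,0)} = R̂_{(1,1),(1,1)} = q`,
`R̂_{(0,1),(1,0)} = R̂_{(1,0),(0,1)} = 1`, `R̂_{(1,0),(1,0)} = q − q²`. -/
theorem stmt_4 (q : ℂ) (hq3 : q ^ 3 = 1) (hq1 : q ≠ 1)
    (R : Matrix (Fin 2 × Fin 2) (Fin 2 × Fin 2) ℂ)
    (hR : R = fun p r =>
      if p = (0, 0) ∧ r = (0, 0) then q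
      else if p = (1, 1) ∧ r = (1, 1) then q
      else if p = (0, 1) ∧ r = (1, 0) then 1
      else if p = (1, 0) ∧ r = (0, 1) then 1
      else if p = (1, 0) ∧ r = (1, 0) then q - q ^ 2
      else 0)
    (R12 R23 : Matrix ((Fin 2 × Fin 2) × Fin 2) ((Fin 2 × Fin 2) × Fin 2) ℂ)
    (hR12 : R12 = R ⊗ₖ (1 : Matrix (Fin 2) (Fin 2) ℂ))
    (hR23 : R23 = Matrix.reindex (Equiv.prodAssoc (Fin 2) (Fin 2) (Fin 2)).symm
        (Equiv.prodAssoc (Fin 2) (Fin 2) (Fin 2)).symm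
        ((1 : Matrix (Fin 2) (Fin 2) ℂ) ⊗ₖ R)) :
    R12 * R23 * R12 = R23 * R12 * R23 := by
  have hecke : q * (q - q ^ 2) = q ^ 2 - 1 := by linear_combination -hq3
  -- Only the Hecke identity is needed, so the off-diagonal parameter is kept opaque.
  generalize q - q ^ 2 = s at hecke hR
  have h12 : ∀ a b c d e f, R12 ((a, b), c) ((d, e), f) =
      if c = f then R (a, b) (d, e) else 0 := by
    intro a b c d e f
    rw [hR12, Matrix.kroneckerMap_apply, Matrix.one_apply, mul_ite, mul_one, mul_zero]
  have h23 : ∀ a b c d e f, R23 ((a, b), c) ((d, e), f) =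
      if a = d then R (b, c) (e, f) else 0 := by
    intro a b c d e f
    rw [hR23]
    change (1 : Matrix (Fin 2) (Fin 2) ℂ) a d * R (b, c) (e, f) = _
    rw [Matrix.one_apply, ite_mul, one_mul, zero_mul]
  have hRe : ∀ a b d e, R (a, b) (d, e) =
      if a = b then (if d = a ∧ e = a then q else 0)
      else if a = e ∧ b = d then 1
      else if a = 1 ∧ d = 1 ∧ e = 0 then s else 0 := by
    intro a b d e
    rw [hR]
    fin_cases a <;> fin_cases b <;> fin_cases d <;> fin_cases e <;> simp
  clear hR hR12 hR23 hq3 hq1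
  ext ⟨⟨a, b⟩, c⟩ ⟨⟨d, e⟩, f⟩
  simp only [Matrix.mul_apply, Fintype.sum_prod_type, Fin.sum_univ_two, h12, h23, hRe]
  clear h12 h23 hRe
  fin_cases a <;> fin_cases b <;> fin_cases c <;> fin_cases d <;> fin_cases e <;> fin_cases f <;>
    simp <;> grind
end

section
/- Let q ∈ ℂ be a primitive cube root of unity and let R̂ be the 4×4 complex matrix [[q,0,0,0],[0,0,1,0],[0,1,q−q²,0],[0,0,0,q]]. Then R̂ satisfies the Z₃-graded Hecke condition (R̂ − q·I₄)(R̂ + q²·I₄) = 0; consequently R̂ is invertible with inverse R̂⁻¹ = R̂ − (q − q²)·I₄. (Theorem 7.1(b).) -/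
/-- Theorem 7.1(b): the matrix
`R̂ = !![q,0,0,0; 0,0,1,0; 0,1,q−q²,0; 0,0,0,q]` satisfies the Z₃-graded Hecke condition
`(R̂ − q·I₄)(R̂ + q²·I₄) = 0`; consequently `R̂` is invertible with
`R̂⁻¹ = R̂ − (q − q²)·I₄`. -/
theorem stmt_5 (q : ℂ) (hq3 : q ^ 3 = 1) (hq1 : q ≠ 1)
    (R : Matrix (Fin 4) (Fin 4) ℂ)
    (hR : R = !![q, 0, 0, 0; 0, 0, 1, 0; 0, 1, q - q ^ 2, 0; 0, 0, 0, q]) :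
    (R - q • 1) * (R + q ^ 2 • 1) = 0 ∧
    IsUnit R ∧ R⁻¹ = R - (q - q ^ 2) • 1 := by
  -- Since `q ^ 3 = 1`, the Hecke condition is `R * (R - (q - q ^ 2) • 1) = 1` in disguise.
  have hinv : R * (R - (q - q ^ 2) • 1) = 1 := by
    subst hR
    ext i j
    fin_cases i <;> fin_cases j <;>
      simp [Matrix.mul_apply, Fin.sum_univ_four] <;> linear_combination hq3
  refine ⟨?_, .of_mul_eq_one _ hinv, Matrix.inv_eq_right_inv hinv⟩
  have hsplit : (R - q • 1) * (R + q ^ 2 • 1) =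
      R * (R - (q - q ^ 2) • 1) - q ^ 3 • (1 : Matrix (Fin 4) (Fin 4) ℂ) := by
    simp only [sub_mul, mul_add, mul_sub, smul_mul_assoc, mul_smul_comm, mul_one, one_mul]
    module
  rw [hsplit, hinv, hq3, one_smul, sub_self]
end

section
/- In the Z₃-graded Grassmann–Weyl algebra Ã_q(2), the quadratic elements E₁₁ = θ∂θ, E₁₂ = θ∂φ, E₂₁ = φ∂θ, E₂₂ = φ∂φ satisfy the defining relations of the Z₃-graded universal enveloping algebra U_q(g̃l(2)): (i) E₁₁E₁₂ − q²E₁₂E₁₁ = E₁₂; (ii) E₁₁E₂₁ − qE₂₁E₁₁ = −qE₂₁; (iii) E₁₁E₂₂ − E₂₂E₁₁ = 0; (iv) E₂₁E₁₂ − q²E₁₂E₂₁ = E₂₂ − E₁₁ + (1−q²)E₁₁²; (v) E₁₂E₂₂ − E₂₂E₁₂ = E₁₂ + (q²−1)E₁₂E₁₁; (vi) E₂₂E₂₁ − E₂₁E₂₂ = qE₂₁ + (1−q)E₂₁E₁₁. (Theorem 8.1.) -/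
/-!
The quadratic relations bring every word to normal order: `θ` before `φ` before `∂θ` before `∂φ`.
Each of the six identities involves only words of degree at most four, and once both sides are in
normal order the coefficients agree because `q ^ 3 = 1`.
-/

/-- Theorem 8.1: In the Z₃-graded Grassmann–Weyl algebra `Ã_q(2)`
(realized universally as any ℂ-algebra with elements `θ, φ, ∂θ, ∂φ` satisfying its
defining relations), the quadratic elements `E₁₁ = θ∂θ`, `E₁₂ = θ∂φ`, `E₂₁ = φ∂θ`,
`E₂₂ = φ∂φ` satisfy the defining relations of `U_q(g̃l(2))`. -/
theorem stmt_6 (q : ℂ) (hq3 : q ^ 3 = 1) (hq1 : q ≠ 1)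
    (A : Type*) [Ring A] [Algebra ℂ A]
    (θ φ dθ dφ : A)
    (h1 : θ * φ = q ^ 2 • (φ * θ)) (h2 : θ ^ 3 = 0) (h3 : φ ^ 3 = 0)
    (h4 : dθ * θ = 1 + q ^ 2 • (θ * dθ))
    (h5 : dθ * φ = q • (φ * dθ))
    (h6 : dφ * θ = q • (θ * dφ))
    (h7 : dφ * φ = 1 + q ^ 2 • (φ * dφ) + (q ^ 2 - 1) • (θ * dθ))
    (h8 : dφ * dθ = q ^ 2 • (dθ * dφ))
    (h9 : dθ ^ 3 = 0) (h10 : dφ ^ 3 = 0)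
    (E11 E12 E21 E22 : A)
    (hE11 : E11 = θ * dθ) (hE12 : E12 = θ * dφ)
    (hE21 : E21 = φ * dθ) (hE22 : E22 = φ * dφ) :
    E11 * E12 - q ^ 2 • (E12 * E11) = E12 ∧
    E11 * E21 - q • (E21 * E11) = -(q • E21) ∧
    E11 * E22 - E22 * E11 = 0 ∧
    E21 * E12 - q ^ 2 • (E12 * E21) = E22 - E11 + (1 - q ^ 2) • E11 ^ 2 ∧
    E12 * E22 - E22 * E12 = E12 + (q ^ 2 - 1) • (E12 * E11) ∧
    E22 * E21 - E21 * E22 = q • E21 + (1 - q) • (E21 * E11) := by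
  -- `h1` solved for the out-of-order product `φ * θ`.
  have h1' : φ * θ = q • (θ * φ) := by
    rw [h1, smul_smul, ← pow_succ', hq3, one_smul]
  -- The reordering rules with an arbitrary right factor, for right-associated words.
  have k1 (x : A) : φ * (θ * x) = q • (θ * (φ * x)) := by
    rw [← mul_assoc, h1', smul_mul_assoc, mul_assoc]
  have k4 (x : A) : dθ * (θ * x) = x + q ^ 2 • (θ * (dθ * x)) := by
    rw [← mul_assoc, h4, add_mul, one_mul, smul_mul_assoc, mul_assoc]
  have k5 (x : A) : dθ * (φ * x) = q • (φ * (dθ * x)) := by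
    rw [← mul_assoc, h5, smul_mul_assoc, mul_assoc]
  have k6 (x : A) : dφ * (θ * x) = q • (θ * (dφ * x)) := by
    rw [← mul_assoc, h6, smul_mul_assoc, mul_assoc]
  have k7 (x : A) : dφ * (φ * x) =
      x + q ^ 2 • (φ * (dφ * x)) + (q ^ 2 - 1) • (θ * (dθ * x)) := by
    rw [← mul_assoc, h7, add_mul, add_mul, one_mul, smul_mul_assoc, smul_mul_assoc, mul_assoc,
      mul_assoc]
  subst hE11 hE12 hE21 hE22
  refine ⟨?_, ?_, ?_, ?_, ?_, ?_⟩ <;>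
  · simp only [pow_two (θ * dθ), mul_assoc, k1, k4, k5, k6, k7, h8, mul_add, mul_smul_comm]
    match_scalars <;> grind
end

section
/- In the Z₃-graded Grassmann–Weyl algebra Ã_q(2), let E₁₁ = θ∂θ, E₁₂ = θ∂φ, E₂₁ = φ∂θ, E₂₂ = φ∂φ and D = E₁₁ + E₂₂. Then D commutes with each of the four elements E₁₁, E₁₂, E₂₁, E₂₂ (i.e. D belongs to the center of the subalgebra U_q(g̃l(2)) generated by the E_ij). -/
/-!
`D` acts as a `q²`-twisted number operator: `D x = x + q² x D` for both coordinates `x ∈ {θ, φ}`,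
and symmetrically `y D = y + q² D y` for both derivatives `y ∈ {∂θ, ∂φ}`. Hence both `D (x y)` and
`(x y) D` equal `x y + q² x D y`, so `D` commutes with each of the four products `x y`. The twisted
relations follow from the quadratic relations of the algebra together with `q³ = 1`.
-/

/-- An element satisfying the twisted relations `D x = x + c x D` and `y D = y + c D y` with the
same scalar `c` commutes with `x y`. -/
lemma twisted_number_comm {A : Type*} [Ring A] [Algebra ℂ A] {c : ℂ} {D x y : A}
    (hx : D * x = x + c • (x * D)) (hy : y * D = y + c • (D * y)) :
    D * (x * y) = x * y * D := by
  rw [← mul_assoc, hx, mul_assoc x y D, hy, add_mul, mul_add, smul_mul_assoc, mul_smul_comm,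
    mul_assoc]

/-- In the Z₃-graded Grassmann–Weyl algebra `Ã_q(2)` (realized universally
as any ℂ-algebra with elements `θ, φ, ∂θ, ∂φ` satisfying its defining relations), the
element `D = E₁₁ + E₂₂` commutes with each of `E₁₁ = θ∂θ`, `E₁₂ = θ∂φ`, `E₂₁ = φ∂θ`,
`E₂₂ = φ∂φ`, i.e. `D` is central in `U_q(g̃l(2))`. -/
theorem stmt_7 (q : ℂ) (hq3 : q ^ 3 = 1) (hq1 : q ≠ 1)
    (A : Type*) [Ring A] [Algebra ℂ A]
    (θ φ dθ dφ : A)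
    (h1 : θ * φ = q ^ 2 • (φ * θ)) (h2 : θ ^ 3 = 0) (h3 : φ ^ 3 = 0)
    (h4 : dθ * θ = 1 + q ^ 2 • (θ * dθ))
    (h5 : dθ * φ = q • (φ * dθ))
    (h6 : dφ * θ = q • (θ * dφ))
    (h7 : dφ * φ = 1 + q ^ 2 • (φ * dφ) + (q ^ 2 - 1) • (θ * dθ))
    (h8 : dφ * dθ = q ^ 2 • (dθ * dφ))
    (h9 : dθ ^ 3 = 0) (h10 : dφ ^ 3 = 0)
    (E11 E12 E21 E22 D : A)
    (hE11 : E11 = θ * dθ) (hE12 : E12 = θ * dφ)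
    (hE21 : E21 = φ * dθ) (hE22 : E22 = φ * dφ)
    (hD : D = E11 + E22) :
    D * E11 = E11 * D ∧ D * E12 = E12 * D ∧
    D * E21 = E21 * D ∧ D * E22 = E22 * D := by
  subst hE11 hE12 hE21 hE22
  have q4 : q * q ^ 2 = 1 := by rw [← hq3]; ring
  have h1' : φ * θ = q • (θ * φ) := by rw [h1, smul_smul, q4, one_smul]
  have h8' : dθ * dφ = q • (dφ * dθ) := by rw [h8, smul_smul, q4, one_smul]
  have hθ : D * θ = θ + q ^ 2 • (θ * D) := by
    have e : φ * dφ * θ = q ^ 2 • (θ * (φ * dφ)) := by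
      rw [mul_assoc, h6, mul_smul_comm, ← mul_assoc, h1', smul_mul_assoc, smul_smul, mul_assoc,
        pow_two]
    rw [hD, add_mul, e, mul_assoc, h4, mul_add, mul_one, mul_smul_comm, mul_add, smul_add,
      add_assoc]
  have hφ : D * φ = φ + q ^ 2 • (φ * D) := by
    have e : θ * dθ * φ = φ * (θ * dθ) := by
      rw [mul_assoc, h5, mul_smul_comm, ← mul_assoc, h1, smul_mul_assoc, smul_smul, q4, one_smul,
        mul_assoc]
    rw [hD, add_mul, e, mul_assoc φ dφ φ, h7]
    simp only [mul_add, mul_sub, mul_one, mul_smul_comm, smul_add, sub_smul, one_smul]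
    abel
  have hdθ : dθ * D = dθ + q ^ 2 • (D * dθ) := by
    have e : dθ * (φ * dφ) = q ^ 2 • (φ * dφ * dθ) := by
      rw [← mul_assoc, h5, smul_mul_assoc, mul_assoc, h8', mul_smul_comm, smul_smul, mul_assoc,
        pow_two]
    rw [hD, mul_add, e, ← mul_assoc, h4, add_mul, one_mul, smul_mul_assoc, add_mul, smul_add,
      add_assoc]
  have hdφ : dφ * D = dφ + q ^ 2 • (D * dφ) := by
    have e : dφ * (θ * dθ) = θ * dθ * dφ := by
      rw [← mul_assoc, h6, smul_mul_assoc, mul_assoc, h8, mul_smul_comm, smul_smul, q4, one_smul,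
        mul_assoc]
    rw [hD, mul_add, e, ← mul_assoc dφ φ dφ, h7]
    simp only [add_mul, sub_mul, one_mul, smul_mul_assoc, smul_add, sub_smul, one_smul]
    abel
  exact ⟨twisted_number_comm hθ hdθ, twisted_number_comm hθ hdφ,
    twisted_number_comm hφ hdθ, twisted_number_comm hφ hdφ⟩
end

section
/- In the Z₃-graded Grassmann–Weyl algebra Ã_q(2), let D = θ∂θ + φ∂φ and E = 1 + (q²−1)D. Then E·θ = q²·θ·E, E·φ = q²·φ·E, E·∂θ = q·∂θ·E and E·∂φ = q·∂φ·E. -/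
/-!
The point is that `D` satisfies the `q`-commutation relations `D x = x + q² x D` for `x = θ, φ`
and `∂ D = ∂ + q² D ∂` for `∂ = ∂θ, ∂φ`, each of which follows from the defining quadratic
relations by reordering and `q³ = 1`. The affine change `E = 1 + (q² - 1) D` absorbs the
inhomogeneous term, turning these into `E x = q² x E` and `∂ E = q² E ∂`, and the latter is
`E ∂ = q ∂ E` because `q · q² = 1`.
-/

/-- The affine change `E = 1 + c D` with `c = p - 1` turns `D x = x + p x D` into `E x = p x E`. -/
lemma affine_mul_eq {A : Type*} [Ring A] [Algebra ℂ A] (p : ℂ) (D x : A)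
    (h : D * x = x + p • (x * D)) :
    (1 + (p - 1) • D) * x = p • (x * (1 + (p - 1) • D)) := by
  simp only [add_mul, mul_add, one_mul, mul_one, smul_mul_assoc, mul_smul_comm, h]
  module

/-- The mirror image of `affine_mul_eq`, solved for `E y` using an inverse `r` of `p`. -/
lemma affine_mul_eq' {A : Type*} [Ring A] [Algebra ℂ A] (p r : ℂ) (hr : r * p = 1) (D y : A)
    (h : y * D = y + p • (D * y)) :
    (1 + (p - 1) • D) * y = r • (y * (1 + (p - 1) • D)) := by
  simp only [add_mul, mul_add, one_mul, mul_one, smul_mul_assoc, mul_smul_comm, h]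
  match_scalars
  · linear_combination -hr
  · linear_combination -(p - 1) * hr


/-- In the Z₃-graded Grassmann–Weyl algebra `Ã_q(2)` (realized universally
as any ℂ-algebra with elements `θ, φ, ∂θ, ∂φ` satisfying its defining relations), with
`D = θ∂θ + φ∂φ` and `E = 1 + (q² − 1)·D`, one has `E·θ = q²·θ·E`, `E·φ = q²·φ·E`,
`E·∂θ = q·∂θ·E` and `E·∂φ = q·∂φ·E`. -/
theorem stmt_9 (q : ℂ) (hq3 : q ^ 3 = 1) (hq1 : q ≠ 1)
    (A : Type*) [Ring A] [Algebra ℂ A]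
    (θ φ dθ dφ : A)
    (h1 : θ * φ = q ^ 2 • (φ * θ)) (h2 : θ ^ 3 = 0) (h3 : φ ^ 3 = 0)
    (h4 : dθ * θ = 1 + q ^ 2 • (θ * dθ))
    (h5 : dθ * φ = q • (φ * dθ))
    (h6 : dφ * θ = q • (θ * dφ))
    (h7 : dφ * φ = 1 + q ^ 2 • (φ * dφ) + (q ^ 2 - 1) • (θ * dθ))
    (h8 : dφ * dθ = q ^ 2 • (dθ * dφ))
    (h9 : dθ ^ 3 = 0) (h10 : dφ ^ 3 = 0)
    (D E : A) (hD : D = θ * dθ + φ * dφ) (hE : E = 1 + (q ^ 2 - 1) • D) :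
    E * θ = q ^ 2 • (θ * E) ∧ E * φ = q ^ 2 • (φ * E) ∧
    E * dθ = q • (dθ * E) ∧ E * dφ = q • (dφ * E) := by
  have hr : q * q ^ 2 = 1 := by linear_combination hq3
  subst hE hD
  refine ⟨affine_mul_eq _ _ _ ?_, affine_mul_eq _ _ _ ?_,
    affine_mul_eq' _ _ hr _ _ ?_, affine_mul_eq' _ _ hr _ _ ?_⟩
  · have e : θ * (φ * dφ) = q ^ 2 • (φ * (θ * dφ)) := by
      rw [← mul_assoc, h1, smul_mul_assoc, mul_assoc]
    simp only [add_mul, mul_add, mul_assoc, h4, h6, e, mul_one, mul_smul_comm]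
    match_scalars
    all_goals first | ring1 | linear_combination (-q) * hq3
  · have e : θ * (φ * dθ) = q ^ 2 • (φ * (θ * dθ)) := by
      rw [← mul_assoc, h1, smul_mul_assoc, mul_assoc]
    simp only [add_mul, mul_add, mul_assoc, h5, h7, e, mul_one, mul_smul_comm]
    match_scalars
    all_goals first | ring1 | linear_combination hq3
  · simp only [add_mul, mul_add, ← mul_assoc, h4, h5, one_mul, smul_mul_assoc]
    simp only [mul_assoc, h8, mul_smul_comm]
    match_scalars
    all_goals first | ring1 | linear_combination (-q) * hq3
  · simp only [add_mul, mul_add, ← mul_assoc, h6, h7, one_mul, smul_mul_assoc]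
    simp only [mul_assoc, h8, mul_smul_comm]
    match_scalars
    all_goals first | ring1 | linear_combination hq3
end

section
/- Let C be the quotient of the free ℂ-algebra on generators a, β, γ, d, θ, φ, ξ, x by the two-sided ideal generated by: (quantum group relations) aβ − βa, βγ − γβ, dβ − βd, aγ − qγa, dγ − q²γd, ad − da − (q−1)βγ; (first-order calculus relations) θφ − q²φθ, θ³, φ³, θξ − qξθ, θx − xθ, φx − xφ, φξ − q²ξφ − (1−q)xθ, ξx − xξ; (cross relations) θa − aθ, θd − dθ, θγ − qγθ, θβ − q²βθ, φa − aφ, φd − dφ, φγ − q²γφ, φβ − qβφ, ξa − aξ, ξd − dξ, ξγ − q²γξ, ξβ − qβξ, xa − ax, xβ − βx, xγ − γx, xd − dx. Then the coacted elements θ' = aθ + βφ, φ' = γθ + dφ, ξ' = aξ + q²βx, x' = qγξ + dx satisfy the same first-order calculus relations: θ'ξ' = qξ'θ', θ'x' = x'θ', φ'x' = x'φ', φ'ξ' = q²ξ'φ' + (1−q)x'θ', and ξ'x' = x'ξ'. (This is the left-covariance of the first-order differential calculus of Theorem 4.4 under the Z₃-graded quantum group.) -/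
/-!
Each product of coacted elements is rewritten in ordered monomials: `β, γ, d, a` in this order,
followed by `x, ξ`, followed by `θ` or `φ` (each product involves at most one of these last two
letters, so `θ` and `φ` never have to be exchanged). The quadratic defining relations, with
`β * γ = γ * β` read from right to left, move a pair of letters towards this order. Both sides of
each identity then become linear combinations of the same ordered monomials, and the coefficients,
polynomials in `q`, agree modulo `q ^ 3 = 1`.
-/

/-- A relation `u * v = w` also rewrites `u * v` inside a right-associated word `u * (v * t)`. -/
theorem mul_word {C : Type*} [Semigroup C] {u v w : C} (h : u * v = w) (t : C) :
    u * (v * t) = w * t := by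
  rw [← mul_assoc, h]

/-- Left-covariance of the first-order differential calculus of Theorem 4.4.
In the Z₃-graded tensor product `C = O(G̃L_q(2)) ⊗ Γ` (realized universally as any
ℂ-algebra with elements `a, β, γ, d, θ, φ, ξ, x` satisfying the listed defining
relations), the coacted elements `θ' = aθ + βφ`, `φ' = γθ + dφ`, `ξ' = aξ + q²βx`,
`x' = qγξ + dx` satisfy the same first-order calculus relations. -/
theorem stmt_13 (q : ℂ) (hq3 : q ^ 3 = 1) (hq1 : q ≠ 1)
    (C : Type*) [Ring C] [Algebra ℂ C]
    (a β γ d θ φ ξ x : C)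
    -- quantum group relations
    (h1 : a * β = β * a) (h2 : β * γ = γ * β) (h3 : d * β = β * d)
    (h4 : a * γ = q • (γ * a)) (h5 : d * γ = q ^ 2 • (γ * d))
    (h6 : a * d = d * a + (q - 1) • (β * γ))
    -- first-order calculus relations
    (h7 : θ * φ = q ^ 2 • (φ * θ)) (h8 : θ ^ 3 = 0) (h9 : φ ^ 3 = 0)
    (h10 : θ * ξ = q • (ξ * θ)) (h11 : θ * x = x * θ) (h12 : φ * x = x * φ)
    (h13 : φ * ξ = q ^ 2 • (ξ * φ) + (1 - q) • (x * θ))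
    (h14 : ξ * x = x * ξ)
    -- cross relations
    (h15 : θ * a = a * θ) (h16 : θ * d = d * θ)
    (h17 : θ * γ = q • (γ * θ)) (h18 : θ * β = q ^ 2 • (β * θ))
    (h19 : φ * a = a * φ) (h20 : φ * d = d * φ)
    (h21 : φ * γ = q ^ 2 • (γ * φ)) (h22 : φ * β = q • (β * φ))
    (h23 : ξ * a = a * ξ) (h24 : ξ * d = d * ξ)
    (h25 : ξ * γ = q ^ 2 • (γ * ξ)) (h26 : ξ * β = q • (β * ξ))
    (h27 : x * a = a * x) (h28 : x * β = β * x)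
    (h29 : x * γ = γ * x) (h30 : x * d = d * x)
    -- coacted elements
    (θ' φ' ξ' x' : C)
    (hθ' : θ' = a * θ + β * φ) (hφ' : φ' = γ * θ + d * φ)
    (hξ' : ξ' = a * ξ + q ^ 2 • (β * x)) (hx' : x' = q • (γ * ξ) + d * x) :
    θ' * ξ' = q • (ξ' * θ') ∧
    θ' * x' = x' * θ' ∧
    φ' * x' = x' * φ' ∧
    φ' * ξ' = q ^ 2 • (ξ' * φ') + (1 - q) • (x' * θ') ∧
    ξ' * x' = x' * ξ' := by
  subst hθ' hφ' hξ' hx'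
  refine ⟨?_, ?_, ?_, ?_, ?_⟩ <;>
  · simp only [mul_add, add_mul, smul_mul_assoc, mul_smul_comm, smul_add, smul_smul, mul_assoc,
      h10, h11, h12, h13, h14,
      mul_word h1, mul_word h2.symm, mul_word h3, mul_word h4, mul_word h5, mul_word h6,
      mul_word h10, mul_word h11, mul_word h12, mul_word h13, mul_word h14,
      mul_word h15, mul_word h16, mul_word h17, mul_word h18, mul_word h19, mul_word h20,
      mul_word h21, mul_word h22, mul_word h23, mul_word h24, mul_word h25, mul_word h26,
      mul_word h27, mul_word h28, mul_word h29, mul_word h30]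
    -- the remaining goals equate coefficients, modulo `q ^ 3 = 1`
    match_scalars <;> grind
end

section
/- Let Γ be the quotient of the free ℂ-algebra on generators θ, φ, ξ, x by the two-sided ideal generated by: θφ − q²φθ, θ³, φ³, θξ − qξθ, θx − xθ, φx − xφ, φξ − q²ξφ − (1−q)xθ, ξx − xξ. Then the elements ξ³ and x³ are central in Γ: each commutes with all four generators θ, φ, ξ, x. (This is the claim of Remark 3 that the cubes of the differentials dθ and dφ are central in the first-order differential algebra.) -/
/-!
The element `x` commutes with every generator, and `ξ` commutes with `x`, so only the relations of
`ξ ^ 3` with `θ` and `φ` need work. Moving `θ` past `ξ ^ 3` gives the factor `q ^ 3 = 1`. Moving `φ`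
past `ξ ^ 3` gives the factor `q ^ 6 = 1` and an extra term `ξ ^ 2 * x * θ` with coefficient
`(1 - q) * (q ^ 2 + q ^ 3 + q ^ 4) = (1 - q) * q ^ 2 * (1 + q + q ^ 2)`, which vanishes because `q`
is a primitive cube root of unity.
-/


/-- Remark 3: In the first-order differential algebra `Γ` on the
Z₃-graded quantum exterior plane (realized universally as any ℂ-algebra with elements
`θ, φ, ξ = dθ, x = dφ` satisfying the listed defining relations), the cubes `ξ³` and
`x³` are central: each commutes with all four generators `θ, φ, ξ, x`. -/
theorem stmt_14 (q : ℂ) (hq3 : q ^ 3 = 1) (hq1 : q ≠ 1)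
    (Γ : Type*) [Ring Γ] [Algebra ℂ Γ]
    (θ φ ξ x : Γ)
    (h1 : θ * φ = q ^ 2 • (φ * θ)) (h2 : θ ^ 3 = 0) (h3 : φ ^ 3 = 0)
    (h4 : θ * ξ = q • (ξ * θ)) (h5 : θ * x = x * θ) (h6 : φ * x = x * φ)
    (h7 : φ * ξ = q ^ 2 • (ξ * φ) + (1 - q) • (x * θ))
    (h8 : ξ * x = x * ξ) :
    (ξ ^ 3 * θ = θ * ξ ^ 3 ∧ ξ ^ 3 * φ = φ * ξ ^ 3 ∧
     ξ ^ 3 * ξ = ξ * ξ ^ 3 ∧ ξ ^ 3 * x = x * ξ ^ 3) ∧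
    (x ^ 3 * θ = θ * x ^ 3 ∧ x ^ 3 * φ = φ * x ^ 3 ∧
     x ^ 3 * ξ = ξ * x ^ 3 ∧ x ^ 3 * x = x * x ^ 3) := by
  have hq : 1 + q + q ^ 2 = 0 := by
    have h : (q - 1) * (1 + q + q ^ 2) = 0 := by linear_combination hq3
    exact (mul_eq_zero.mp h).resolve_left (sub_ne_zero.mpr hq1)
  -- `x * θ` commutes past `ξ` up to the factor `q`, the same factor as `θ` alone.
  have hxθ : x * θ * ξ = q • (ξ * (x * θ)) := by
    rw [mul_assoc, h4, mul_smul_comm, ← mul_assoc, ← h8, mul_assoc]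
  have hθ2 : θ * ξ ^ 2 = q ^ 2 • (ξ ^ 2 * θ) := by
    rw [pow_two ξ, ← mul_assoc, h4, smul_mul_assoc, mul_assoc, h4, mul_smul_comm, smul_smul,
      ← mul_assoc, pow_two q]
  have hθ3 : θ * ξ ^ 3 = ξ ^ 3 * θ := by
    rw [pow_succ ξ 2, ← mul_assoc, hθ2, smul_mul_assoc, mul_assoc, h4, mul_smul_comm, smul_smul,
      ← mul_assoc, ← pow_succ, hq3, one_smul]
  -- Since `q ^ 2 + q = -1`, the coefficient `(1 - q) * (q ^ 2 + q)` of `ξ * (x * θ)` is `q - 1`.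
  have hφ2 : φ * ξ ^ 2 = q • (ξ ^ 2 * φ) + (q - 1) • (ξ * (x * θ)) := by
    have e : φ * ξ ^ 2 = (q ^ 2 * q ^ 2) • (ξ ^ 2 * φ)
        + ((1 - q) * (q ^ 2 + q)) • (ξ * (x * θ)) := by
      rw [pow_two ξ, ← mul_assoc, h7, add_mul, smul_mul_assoc, smul_mul_assoc, hxθ, mul_assoc ξ φ,
        h7, mul_add, mul_smul_comm, mul_smul_comm, mul_assoc ξ ξ φ]
      module
    rw [e]
    congr 2
    · linear_combination q * hq3
    · linear_combination (1 - q) * hq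
  have hφ3 : φ * ξ ^ 3 = ξ ^ 3 * φ := by
    have e : φ * ξ ^ 3 = q ^ 3 • (ξ ^ 3 * φ) := by
      rw [pow_succ ξ 2, ← mul_assoc, hφ2, add_mul, smul_mul_assoc, smul_mul_assoc,
        mul_assoc (ξ ^ 2) φ, h7, mul_assoc ξ (x * θ), hxθ, mul_add, mul_smul_comm, mul_smul_comm,
        mul_smul_comm, mul_assoc (ξ ^ 2) ξ φ, ← mul_assoc ξ ξ, ← pow_two ξ]
      module
    rw [e, hq3, one_smul]
  have hx : ∀ {a : Γ}, a * x = x * a → x ^ 3 * a = a * x ^ 3 :=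
    fun h => (Commute.pow_right (show Commute _ x from h) 3).symm
  exact ⟨⟨hθ3.symm, hφ3.symm, (pow_mul_comm' ξ 3),
    (Commute.pow_left (show Commute ξ x from h8) 3)⟩, hx h5, hx h6, hx h8, hx rfl⟩
end
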